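/- arXiv:1312.0843 — 5 statements merged into one kernel-verified Lean document; each statement's English description precedes it below -/
import Mathlib

section
/- Let σ and w be Radon measures on ℝ. For each finite interval I, let b_I be the unique point (if it exists) such that P(1_{{b_I}} dσ, I) > ½ P(dσ, I) and P(1_{{b_I}} dw, I) > ½ P(dw, I); set σ̃_I := σ − σ{b_I} δ_{b_I} if b_I exists and σ̃_I := σ otherwise, and define w̃_I similarly. If there is a constant A such that P(dσ̃_I, I) P(dw, I) + P(dw̃_I, I) P(dσ, I) ≤ A² for all finite intervals I, then [σ,w]_{A₂}* + [w,σ]_{A₂}* ≤ C·A for an absolute constant C. -/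
/-!
Write `c` and `r` for the center and half-length of `I`. The Poisson kernel at `c` of scale `2 * r`
dominates `1 / r` within distance `r` of `c` and `r * (x - c)⁻²` beyond it, up to constants, so
`σ(I) ∫_{Iᶜ} (x - c)⁻² dw` is at most `25 / 4` times the product of the Poisson integrals of
`1_I dσ` and `1_{Iᶜ} dw`. A single point misses `I` or `Iᶜ`, so deleting it leaves one of these two
factors unchanged; hence the product is controlled whichever point is deleted, heavy or not.
A one-point interval has no scale of its own: there `Iᶜ` is exhausted by the sets
`{x | ε ≤ |x - c|}`, each handled at scale `2 * ε`.
-/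

open MeasureTheory Set
open scoped ENNReal

noncomputable section

/-- The Muckenhoupt–Poisson `A₂` condition `[σ,w]_{A₂}* ≤ A`: for every finite interval `I`
with center `c_I`, `σ(I) ∫_{Iᶜ} (x - c_I)⁻² dw(x) ≤ A²`. -/
def A2star (σ w : Measure ℝ) (A : ℝ) : Prop :=
  ∀ I : Set ℝ, I.OrdConnected → Bornology.IsBounded I →
    σ I * ∫⁻ x in Iᶜ, ENNReal.ofReal (((x - (sInf I + sSup I) / 2) ^ 2)⁻¹) ∂w ≤
      ENNReal.ofReal (A ^ 2)

/-- The Poisson integral `P(dμ, I) = ∫ |I| (|I|² + (x - c_I)²)⁻¹ dμ(x)` of a measure `μ`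
for the interval with center `c` and length `ℓ`. -/
def Pois (μ : Measure ℝ) (c ℓ : ℝ) : ℝ≥0∞ :=
  ∫⁻ x, ENNReal.ofReal (ℓ / (ℓ ^ 2 + (x - c) ^ 2)) ∂μ

/-- `p` is the (automatically unique) point carrying more than half of the Poisson integrals
of both `σ` and `w` for the interval with center `c` and length `ℓ`. -/
def IsHeavyPoint (σ w : Measure ℝ) (c ℓ : ℝ) (p : ℝ) : Prop :=
  (1 / 2 : ℝ≥0∞) * Pois σ c ℓ < Pois (σ.restrict {p}) c ℓ ∧
  (1 / 2 : ℝ≥0∞) * Pois w c ℓ < Pois (w.restrict {p}) c ℓ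

section Poisson

variable {μ ν σ w : Measure ℝ} {c ℓ r : ℝ} {E F I : Set ℝ} {B : ℝ≥0∞}

lemma pois_mono (h : μ ≤ ν) : Pois μ c ℓ ≤ Pois ν c ℓ :=
  lintegral_mono' h le_rfl

/-- The quantity `P(dσ̃, I) P(dw, I) + P(dw̃, I) P(dσ, I)` for the interval `I` with center `c` and
length `ℓ`, where `σ̃` and `w̃` are `σ` and `w` with the point `p` deleted. Here `p` is any point,
heavy or not. -/
def puncturedPois (σ w : Measure ℝ) (c ℓ p : ℝ) : ℝ≥0∞ :=
  Pois (σ.restrict {p}ᶜ) c ℓ * Pois w c ℓ + Pois (w.restrict {p}ᶜ) c ℓ * Pois σ c ℓ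

lemma puncturedPois_comm (σ w : Measure ℝ) (c ℓ p : ℝ) :
    puncturedPois σ w c ℓ p = puncturedPois w σ c ℓ p :=
  add_comm _ _

lemma puncturedPois_le (σ w : Measure ℝ) (c ℓ p : ℝ) :
    puncturedPois σ w c ℓ p ≤ Pois σ c ℓ * Pois w c ℓ + Pois w c ℓ * Pois σ c ℓ := by
  unfold puncturedPois
  gcongr <;> exact pois_mono Measure.restrict_le_self

lemma exists_puncturedPois_le
    (heavy : ∀ p, IsHeavyPoint σ w c ℓ p → puncturedPois σ w c ℓ p ≤ B)
    (noHeavy : (¬∃ p, IsHeavyPoint σ w c ℓ p) →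
      Pois σ c ℓ * Pois w c ℓ + Pois w c ℓ * Pois σ c ℓ ≤ B) :
    ∃ p, puncturedPois σ w c ℓ p ≤ B := by
  by_cases hp : ∃ p, IsHeavyPoint σ w c ℓ p
  · exact hp.imp heavy
  · exact ⟨0, (puncturedPois_le σ w c ℓ 0).trans (noHeavy hp)⟩

lemma pois_restrict_mul_pois_restrict_le_puncturedPois (hEF : Disjoint E F) (p : ℝ) :
    Pois (σ.restrict E) c ℓ * Pois (w.restrict F) c ℓ ≤ puncturedPois σ w c ℓ p := by
  by_cases hpE : p ∈ E
  · have hF : F ⊆ {p}ᶜ := subset_compl_singleton_iff.2 (hEF.notMem_of_mem_left hpE)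
    calc Pois (σ.restrict E) c ℓ * Pois (w.restrict F) c ℓ
        ≤ Pois σ c ℓ * Pois (w.restrict {p}ᶜ) c ℓ :=
          mul_le_mul' (pois_mono Measure.restrict_le_self)
            (pois_mono (Measure.restrict_mono hF le_rfl))
      _ = Pois (w.restrict {p}ᶜ) c ℓ * Pois σ c ℓ := mul_comm _ _
      _ ≤ puncturedPois σ w c ℓ p := le_add_self
  · have hE : E ⊆ {p}ᶜ := subset_compl_singleton_iff.2 hpE
    calc Pois (σ.restrict E) c ℓ * Pois (w.restrict F) c ℓ
        ≤ Pois (σ.restrict {p}ᶜ) c ℓ * Pois w c ℓ :=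
          mul_le_mul' (pois_mono (Measure.restrict_mono hE le_rfl))
            (pois_mono Measure.restrict_le_self)
      _ ≤ puncturedPois σ w c ℓ p := le_self_add

lemma measure_le_mul_pois (μ : Measure ℝ) (hE : MeasurableSet E) (hr : 0 < r)
    (hEr : E ⊆ Metric.closedBall c r) :
    μ E ≤ ENNReal.ofReal (5 / 2 * r) * Pois (μ.restrict E) c (2 * r) := by
  rw [Pois, ← lintegral_const_mul' _ _ ENNReal.ofReal_ne_top, ← setLIntegral_one]
  refine setLIntegral_mono' hE fun x hx => ?_
  rw [← ENNReal.ofReal_mul (by positivity), ENNReal.one_le_ofReal]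
  have hsq : (x - c) ^ 2 ≤ r ^ 2 := sq_le_sq' (abs_le.1 (hEr hx)).1 (abs_le.1 (hEr hx)).2
  rw [mul_div_assoc', one_le_div₀ (by positivity)]
  linarith

lemma setLIntegral_inv_sq_le_mul_pois (μ : Measure ℝ) (hF : MeasurableSet F) (hr : 0 < r)
    (hFr : F ⊆ (Metric.ball c r)ᶜ) :
    ∫⁻ x in F, ENNReal.ofReal (((x - c) ^ 2)⁻¹) ∂μ ≤
      ENNReal.ofReal (5 / (2 * r)) * Pois (μ.restrict F) c (2 * r) := by
  rw [Pois, ← lintegral_const_mul' _ _ ENNReal.ofReal_ne_top]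
  refine setLIntegral_mono' hF fun x hx => ?_
  rw [← ENNReal.ofReal_mul (by positivity)]
  refine ENNReal.ofReal_le_ofReal ?_
  have hdist : r ≤ |x - c| := not_lt.1 (hFr hx)
  have hsq : r ^ 2 ≤ (x - c) ^ 2 := sq_le_sq.2 (by rwa [abs_of_pos hr])
  have hpos : 0 < (x - c) ^ 2 := (pow_pos hr 2).trans_le hsq
  rw [div_mul_div_cancel₀ (by positivity), inv_eq_one_div, div_le_div_iff₀ hpos (by positivity)]
  linarith

lemma measure_mul_setLIntegral_inv_sq_le (σ w : Measure ℝ) (hE : MeasurableSet E)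
    (hF : MeasurableSet F) (hr : 0 < r) (hEr : E ⊆ Metric.closedBall c r)
    (hFr : F ⊆ (Metric.ball c r)ᶜ) :
    σ E * ∫⁻ x in F, ENNReal.ofReal (((x - c) ^ 2)⁻¹) ∂w ≤
      ENNReal.ofReal (25 / 4) *
        (Pois (σ.restrict E) c (2 * r) * Pois (w.restrict F) c (2 * r)) := by
  have hconst : 5 / 2 * r * (5 / (2 * r)) = 25 / 4 := by
    field_simp
    norm_num
  refine (mul_le_mul' (measure_le_mul_pois σ hE hr hEr)
    (setLIntegral_inv_sq_le_mul_pois w hF hr hFr)).trans_eq ?_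
  rw [mul_mul_mul_comm, ← ENNReal.ofReal_mul (by positivity), hconst]

lemma measure_mul_setLIntegral_compl_inv_sq_le (hI : MeasurableSet I) (hc : c ∈ I)
    (hball : Metric.ball c r ⊆ I) (hclosedBall : I ⊆ Metric.closedBall c r)
    (h : ∀ ℓ, 0 < ℓ → ∃ p, puncturedPois σ w c ℓ p ≤ B) :
    σ I * ∫⁻ x in Iᶜ, ENNReal.ofReal (((x - c) ^ 2)⁻¹) ∂w ≤ ENNReal.ofReal (25 / 4) * B := by
  -- The maximum keeps the scale positive when `r = 0`; otherwise `F n = Iᶜ` for large `n`.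
  let ρ : ℕ → ℝ := fun n => max r (1 / (n + 1))
  let F : ℕ → Set ℝ := fun n => Iᶜ \ Metric.ball c (ρ n)
  have hρ : Antitone ρ := fun m n hmn => max_le_max_left r (Nat.one_div_le_one_div hmn)
  have hF : Monotone F := fun m n hmn =>
    sdiff_subset_sdiff_right (Metric.ball_subset_ball (hρ hmn))
  have hunion : ⋃ n, F n = Iᶜ := by
    refine subset_antisymm (iUnion_subset fun n => sdiff_subset) fun x hx => mem_iUnion.2 ?_
    obtain ⟨n, hn⟩ := exists_nat_one_div_lt (dist_pos.2 (ne_of_mem_of_not_mem hc hx).symm)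
    exact ⟨n, hx, not_lt.2 (max_le (not_lt.1 fun hlt => hx (hball hlt)) hn.le)⟩
  rw [← hunion, setLIntegral_iUnion_of_directed _ hF.directed_le, ENNReal.mul_iSup]
  refine iSup_le fun n => ?_
  have hρ_pos : 0 < ρ n := lt_max_of_lt_right Nat.one_div_pos_of_nat
  obtain ⟨p, hp⟩ := h (2 * ρ n) (by positivity)
  calc σ I * ∫⁻ x in F n, ENNReal.ofReal (((x - c) ^ 2)⁻¹) ∂w
      ≤ ENNReal.ofReal (25 / 4) *
          (Pois (σ.restrict I) c (2 * ρ n) * Pois (w.restrict (F n)) c (2 * ρ n)) :=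
        measure_mul_setLIntegral_inv_sq_le σ w hI (hI.compl.diff measurableSet_ball) hρ_pos
          (hclosedBall.trans (Metric.closedBall_subset_closedBall (le_max_left _ _)))
          fun _ hx => hx.2
    _ ≤ ENNReal.ofReal (25 / 4) * puncturedPois σ w c (2 * ρ n) p := by
        gcongr
        exact pois_restrict_mul_pois_restrict_le_puncturedPois
          (disjoint_compl_right.mono_right sdiff_subset) p
    _ ≤ ENNReal.ofReal (25 / 4) * B := by gcongr

end Poisson

section Interval

variable {I : Set ℝ}

lemma subset_closedBall_csInf_csSup (hb : Bornology.IsBounded I) :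
    I ⊆ Metric.closedBall ((sInf I + sSup I) / 2) ((sSup I - sInf I) / 2) := by
  rw [← Real.Icc_eq_closedBall]
  exact subset_Icc_csInf_csSup hb.bddBelow hb.bddAbove

lemma ball_csInf_csSup_subset (hI : I.OrdConnected) (hb : Bornology.IsBounded I)
    (hne : I.Nonempty) :
    Metric.ball ((sInf I + sSup I) / 2) ((sSup I - sInf I) / 2) ⊆ I := by
  rw [← Real.Ioo_eq_ball]
  exact IsConnected.Ioo_csInf_csSup_subset ⟨hne, hI.isPreconnected⟩ hb.bddBelow hb.bddAbove

lemma midpoint_csInf_csSup_mem (hI : I.OrdConnected) (hb : Bornology.IsBounded I)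
    (hne : I.Nonempty) : (sInf I + sSup I) / 2 ∈ I := by
  obtain ⟨y, hy⟩ := hne
  have hy' := subset_closedBall_csInf_csSup hb hy
  rcases (Metric.nonneg_of_mem_closedBall hy').eq_or_lt with hr | hr
  · rw [← hr, Metric.closedBall_zero, mem_singleton_iff] at hy'
    exact hy' ▸ hy
  · exact ball_csInf_csSup_subset hI hb ⟨y, hy⟩ (Metric.mem_ball_self hr)

end Interval

lemma a2star_of_exists_puncturedPois_le {σ w : Measure ℝ} {A : ℝ}
    (h : ∀ c ℓ : ℝ, 0 < ℓ → ∃ p, puncturedPois σ w c ℓ p ≤ ENNReal.ofReal (A ^ 2)) :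
    A2star σ w (5 / 2 * A) := by
  intro I hI hb
  rcases I.eq_empty_or_nonempty with rfl | hne
  · simp only [measure_empty, zero_mul, zero_le]
  · have hconst : ENNReal.ofReal ((5 / 2 * A) ^ 2) =
        ENNReal.ofReal (25 / 4) * ENNReal.ofReal (A ^ 2) := by
      rw [← ENNReal.ofReal_mul (by norm_num)]
      ring_nf
    rw [hconst]
    exact measure_mul_setLIntegral_compl_inv_sq_le hI.measurableSet
      (midpoint_csInf_csSup_mem hI hb hne) (ball_csInf_csSup_subset hI hb hne)
      (subset_closedBall_csInf_csSup hb) (h _)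

theorem statement2_general {σ w : Measure ℝ} {A : ℝ}
    (h : ∀ a b : ℝ, a < b →
      ∃ p, puncturedPois σ w ((a + b) / 2) (b - a) p ≤ ENNReal.ofReal (A ^ 2)) :
    A2star σ w (5 / 2 * A) ∧ A2star w σ (5 / 2 * A) := by
  have hcenter : ∀ c ℓ : ℝ, 0 < ℓ → ∃ p, puncturedPois σ w c ℓ p ≤ ENNReal.ofReal (A ^ 2) := by
    intro c ℓ hℓ
    convert h (c - ℓ / 2) (c + ℓ / 2) (by linarith) using 4 <;> ring
  refine ⟨a2star_of_exists_puncturedPois_le hcenter,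
    a2star_of_exists_puncturedPois_le fun c ℓ hℓ => ?_⟩
  simpa only [puncturedPois_comm w σ] using hcenter c ℓ hℓ

theorem statement2 :
    ∃ C : ℝ, 0 < C ∧
      ∀ (σ w : Measure ℝ) [IsLocallyFiniteMeasure σ] [IsLocallyFiniteMeasure w] (A : ℝ),
        0 ≤ A →
        -- Lacey's `A₂`-type condition: for every finite interval `I = [a,b)` (with center
        -- `c = (a+b)/2` and length `ℓ = b - a`),
        -- `P(dσ̃_I, I) P(dw, I) + P(dw̃_I, I) P(dσ, I) ≤ A²`.
        (∀ a b : ℝ, a < b →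
          ((∀ p : ℝ, IsHeavyPoint σ w ((a + b) / 2) (b - a) p →
              Pois (σ.restrict {p}ᶜ) ((a + b) / 2) (b - a) * Pois w ((a + b) / 2) (b - a) +
                Pois (w.restrict {p}ᶜ) ((a + b) / 2) (b - a) * Pois σ ((a + b) / 2) (b - a) ≤
                  ENNReal.ofReal (A ^ 2)) ∧
           ((¬ ∃ p : ℝ, IsHeavyPoint σ w ((a + b) / 2) (b - a) p) →
              Pois σ ((a + b) / 2) (b - a) * Pois w ((a + b) / 2) (b - a) +
                Pois w ((a + b) / 2) (b - a) * Pois σ ((a + b) / 2) (b - a) ≤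
                  ENNReal.ofReal (A ^ 2)))) →
        ∃ A1 A2 : ℝ, 0 ≤ A1 ∧ 0 ≤ A2 ∧ A2star σ w A1 ∧ A2star w σ A2 ∧
          A1 + A2 ≤ C * A := by
  refine ⟨5, by norm_num, fun σ w _ _ A hA H => ?_⟩
  obtain ⟨hσw, hwσ⟩ := statement2_general fun a b hab =>
    exists_puncturedPois_le (H a b hab).1 (H a b hab).2
  exact ⟨5 / 2 * A, 5 / 2 * A, by positivity, by positivity, hσw, hwσ, by linarith⟩
end
end

section
/- Let σ and w be Radon measures on ℝ. For any two adjacent intervals I and J of equal length |I|, one has σ(I)^{1/2} w(J)^{1/2} / |I| ≤ (3/2) min([σ,w]_{A₂}*, [w,σ]_{A₂}*); consequently [σ,w]_{A₂} ≤ (3/2) ([σ,w]_{A₂}* ∧ [w,σ]_{A₂}*). -/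
/-! Let `d` be the common length of the adjacent intervals `K` and `L`. Every point of `L` lies at
distance at most `3 d / 2` from the center of `K`, so on `L ⊆ Kᶜ` the kernel `(x - c_K)⁻²` is at
least `(3 d / 2)⁻²`, and testing the Muckenhoupt–Poisson condition on `K` gives
`σ(K) w(L) ≤ (3 d / 2)² A²`. The bound by the other constant is the same estimate with `(σ, K)` and
`(w, L)` exchanged. -/

open MeasureTheory Set
open scoped ENNReal

noncomputable section

/-- `K` and `L` are adjacent (bounded, nonempty, disjoint, touching) intervals
of equal length. -/
def AdjacentEq (K L : Set ℝ) : Prop :=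
  K.OrdConnected ∧ L.OrdConnected ∧ K.Nonempty ∧ L.Nonempty ∧
  Bornology.IsBounded K ∧ Bornology.IsBounded L ∧ Disjoint K L ∧
  (sSup K = sInf L ∨ sSup L = sInf K) ∧
  sSup K - sInf K = sSup L - sInf L

/-- The center `c_I` of a bounded interval `I`, as in `A2star`. For an empty or unbounded set the
value is arbitrary. -/
def intervalCenter (I : Set ℝ) : ℝ := (sInf I + sSup I) / 2

theorem intervalCenter_mem {I : Set ℝ} (hI : I.OrdConnected) (hbdd : Bornology.IsBounded I)
    (hne : I.Nonempty) : intervalCenter I ∈ I := by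
  rcases (Real.sInf_le_sSup I hbdd.bddBelow hbdd.bddAbove).eq_or_lt with heq | hlt
  · obtain ⟨x, hx⟩ := hne
    have hinf := csInf_le hbdd.bddBelow hx
    have hsup := le_csSup hbdd.bddAbove hx
    have hcenter : intervalCenter I = x := by
      unfold intervalCenter
      linarith
    exact hcenter ▸ hx
  · have hconn : IsConnected I := ⟨hne, hI.isPreconnected⟩
    refine hconn.Ioo_csInf_csSup_subset hbdd.bddBelow hbdd.bddAbove ?_
    unfold intervalCenter
    constructor <;> linarith

theorem one_le_ofReal_sq_mul_ofReal_inv_sq {t r : ℝ} (ht : t ≠ 0) (htr : |t| ≤ r) :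
    1 ≤ ENNReal.ofReal (r ^ 2) * ENNReal.ofReal ((t ^ 2)⁻¹) := by
  have hsq : t ^ 2 ≤ r ^ 2 := sq_le_sq.2 (htr.trans (le_abs_self r))
  rw [← ENNReal.ofReal_mul (sq_nonneg r), ENNReal.one_le_ofReal, ← div_eq_mul_inv]
  exact (one_le_div₀ (sq_pos_of_ne_zero ht)).2 hsq

theorem A2star.measure_mul_measure_le {σ w : Measure ℝ} {A : ℝ} (h : A2star σ w A)
    {I s : Set ℝ} (hI : I.OrdConnected) (hbdd : Bornology.IsBounded I) (hdisj : Disjoint I s)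
    {r : ℝ} (hr : ∀ x ∈ s, |x - intervalCenter I| ≤ r) :
    σ I * w s ≤ ENNReal.ofReal ((A * r) ^ 2) := by
  rcases I.eq_empty_or_nonempty with rfl | hne
  · simp
  let kernel : ℝ → ℝ≥0∞ := fun x ↦ ENNReal.ofReal (((x - intervalCenter I) ^ 2)⁻¹)
  have hmeas : Measurable kernel := by fun_prop
  have hkernel : ∀ x ∈ s, 1 ≤ ENNReal.ofReal (r ^ 2) * kernel x := fun x hx ↦
    -- The kernel vanishes at `c_I`, since `0⁻¹ = 0`, but `c_I ∈ I` is not a point of `s`.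
    one_le_ofReal_sq_mul_ofReal_inv_sq
      (sub_ne_zero.2 (hdisj.ne_of_mem (intervalCenter_mem hI hbdd hne) hx).symm) (hr x hx)
  have hw : w s ≤ ENNReal.ofReal (r ^ 2) * ∫⁻ x in Iᶜ, kernel x ∂w :=
    calc w s = ∫⁻ _ in s, 1 ∂w := (setLIntegral_one s).symm
      _ ≤ ∫⁻ x in s, ENNReal.ofReal (r ^ 2) * kernel x ∂w :=
          setLIntegral_mono (hmeas.const_mul _) hkernel
      _ ≤ ∫⁻ x in Iᶜ, ENNReal.ofReal (r ^ 2) * kernel x ∂w :=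
          lintegral_mono_set hdisj.subset_compl_left
      _ = ENNReal.ofReal (r ^ 2) * ∫⁻ x in Iᶜ, kernel x ∂w := lintegral_const_mul _ hmeas
  calc σ I * w s
      ≤ σ I * (ENNReal.ofReal (r ^ 2) * ∫⁻ x in Iᶜ, kernel x ∂w) := by gcongr
    _ = (σ I * ∫⁻ x in Iᶜ, kernel x ∂w) * ENNReal.ofReal (r ^ 2) := by ring
    _ ≤ ENNReal.ofReal (A ^ 2) * ENNReal.ofReal (r ^ 2) := by
        gcongr
        exact h I hI hbdd
    _ = ENNReal.ofReal ((A * r) ^ 2) := by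
        rw [← ENNReal.ofReal_mul (sq_nonneg A), mul_pow]

namespace AdjacentEq

variable {K L : Set ℝ}

theorem symm (h : AdjacentEq K L) : AdjacentEq L K := by
  obtain ⟨hK, hL, hKne, hLne, hKbdd, hLbdd, hdisj, htouch, hlength⟩ := h
  exact ⟨hL, hK, hLne, hKne, hLbdd, hKbdd, hdisj.symm, htouch.symm, hlength.symm⟩

theorem length_eq (h : AdjacentEq K L) : sSup K - sInf K = sSup L - sInf L := by
  obtain ⟨-, -, -, -, -, -, -, -, hlength⟩ := h
  exact hlength

theorem length_pos (h : AdjacentEq K L) : 0 < sSup K - sInf K := by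
  obtain ⟨-, -, ⟨x, hx⟩, ⟨y, hy⟩, hKbdd, hLbdd, hdisj, htouch, hlength⟩ := h
  have hxinf := csInf_le hKbdd.bddBelow hx
  have hxsup := le_csSup hKbdd.bddAbove hx
  have hyinf := csInf_le hLbdd.bddBelow hy
  have hysup := le_csSup hLbdd.bddAbove hy
  -- Two touching intervals of length zero would be the same singleton.
  by_contra! hlength_nonpos
  exact hdisj.ne_of_mem hx hy (by rcases htouch with hKL | hLK <;> linarith)

theorem abs_sub_intervalCenter_le (h : AdjacentEq K L) {x : ℝ} (hx : x ∈ L) :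
    |x - intervalCenter K| ≤ 3 / 2 * (sSup K - sInf K) := by
  have hlength_pos := h.length_pos
  obtain ⟨-, -, -, -, -, hLbdd, -, htouch, hlength⟩ := h
  have hinf := csInf_le hLbdd.bddBelow hx
  have hsup := le_csSup hLbdd.bddAbove hx
  unfold intervalCenter
  rw [abs_le]
  rcases htouch with hKL | hLK <;> constructor <;> linarith

theorem measure_mul_measure_le (h : AdjacentEq K L) {σ w : Measure ℝ} {A : ℝ}
    (hA : A2star σ w A) :
    σ K * w L ≤ ENNReal.ofReal ((A * (3 / 2 * (sSup K - sInf K))) ^ 2) := by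
  have hdist : ∀ x ∈ L, |x - intervalCenter K| ≤ 3 / 2 * (sSup K - sInf K) :=
    fun _ ↦ h.abs_sub_intervalCenter_le
  obtain ⟨hK, -, -, -, hKbdd, -, hdisj, -, -⟩ := h
  exact hA.measure_mul_measure_le hK hKbdd hdisj hdist

end AdjacentEq

theorem sqrt_toReal_mul_sqrt_toReal_le {a b : ℝ≥0∞} {c : ℝ} (hc : 0 ≤ c)
    (h : a * b ≤ ENNReal.ofReal (c ^ 2)) : √a.toReal * √b.toReal ≤ c := by
  rw [← Real.sqrt_mul ENNReal.toReal_nonneg, ← ENNReal.toReal_mul]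
  exact Real.sqrt_le_iff.2 ⟨hc, ENNReal.toReal_le_of_le_ofReal (sq_nonneg c) h⟩

theorem statement4_general {σ w : Measure ℝ} {A A' : ℝ} (h1 : A2star σ w A) (h2 : A2star w σ A')
    {K L : Set ℝ} (hKL : AdjacentEq K L) :
    σ K * w L ≤ ENNReal.ofReal ((3 / 2 * min A A' * (sSup K - sInf K)) ^ 2) := by
  rw [mul_comm (3 / 2), mul_assoc]
  rcases min_choice A A' with hmin | hmin <;> rw [hmin]
  · exact hKL.measure_mul_measure_le h1
  · rw [mul_comm, hKL.length_eq]
    exact hKL.symm.measure_mul_measure_le h2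

theorem statement4 (σ w : Measure ℝ) [IsLocallyFiniteMeasure σ] [IsLocallyFiniteMeasure w]
    (A A' : ℝ) (hA : 0 ≤ A) (hA' : 0 ≤ A')
    (h1 : A2star σ w A) (h2 : A2star w σ A') :
    ∀ K L : Set ℝ, AdjacentEq K L →
      Real.sqrt (σ K).toReal * Real.sqrt (w L).toReal / (sSup K - sInf K) ≤
        (3 / 2) * min A A' := by
  intro K L hKL
  have hnonneg : 0 ≤ 3 / 2 * min A A' * (sSup K - sInf K) :=
    mul_nonneg (mul_nonneg (by norm_num) (le_min hA hA')) hKL.length_pos.le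
  rw [div_le_iff₀ hKL.length_pos]
  exact sqrt_toReal_mul_sqrt_toReal_le hnonneg (statement4_general h1 h2 hKL)
end
end

section
/- Let σ and w be Radon measures on ℝ and let f, g ∈ 𝓕. Then the function ε ↦ B_ε(f,g) := ∬_{|x−y|>ε} (x−y)⁻¹ f(y) g(x) dσ(y) dw(x) is right-continuous with left limits on (0,∞), and its left limit at ε equals ∬_{|x−y|≥ε} (x−y)⁻¹ f(y) g(x) dσ(y) dw(x). -/
/-!
Near a given `ε > 0` the truncated kernels are bounded by a fixed constant, and `f`, `g` are
integrable, so dominated convergence, applied in `y` and then in `x`, reduces the claim to the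
pointwise behaviour of `t ↦ 𝟙 (t < |x - y|)`. This step function is eventually constant on each side
of `ε`: its value is `𝟙 (ε < |x - y|)` for `t ↓ ε` and `𝟙 (ε ≤ |x - y|)` for `t ↑ ε`.
-/

open MeasureTheory Set Filter
open scoped ENNReal Topology

noncomputable section

/-- `𝓕`: finite linear combinations of indicator functions of finite half-open intervals. -/
def InF (f : ℝ → ℝ) : Prop :=
  f ∈ Submodule.span ℝ {g : ℝ → ℝ | ∃ a b : ℝ, g = (Set.Ico a b).indicator 1}

/-- The truncated Hilbert pairing
`B_ε(f,g) = ∬_{|x-y|>ε} (x-y)⁻¹ f(y) g(x) dσ(y) dw(x)`. -/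
def truncPairing (σ w : Measure ℝ) (f g : ℝ → ℝ) (ε : ℝ) : ℝ :=
  ∫ x, (∫ y, (if ε < |x - y| then (x - y)⁻¹ * f y else 0) ∂σ) * g x ∂w

/-- The variant of the truncated Hilbert pairing with non-strict truncation
`∬_{|x-y|≥ε} (x-y)⁻¹ f(y) g(x) dσ(y) dw(x)`. -/
def truncPairingGe (σ w : Measure ℝ) (f g : ℝ → ℝ) (ε : ℝ) : ℝ :=
  ∫ x, (∫ y, (if ε ≤ |x - y| then (x - y)⁻¹ * f y else 0) ∂σ) * g x ∂w

lemma InF.integrable {f : ℝ → ℝ} (hf : InF f) (μ : Measure ℝ) [IsFiniteMeasureOnCompacts μ] :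
    Integrable f μ := by
  induction hf using Submodule.span_induction with
  | mem u hu =>
    obtain ⟨a, b, rfl⟩ := hu
    exact (integrable_indicator_iff measurableSet_Ico).2
      (integrableOn_const (C := (1 : ℝ)) measure_Ico_lt_top.ne)
  | zero => exact integrable_zero _ _ _
  | add u v _ _ hu hv => exact hu.add hv
  | smul c u _ hu => exact hu.smul c

section KernelPairing

variable {X Y A ι : Type*} [MeasurableSpace X] [MeasurableSpace Y]
  [NormedRing A] [NormedAlgebra ℝ A] {μ : Measure Y} {ν : Measure X} {f : Y → A} {g : X → A}

/-- The bilinear form `∬ K(x,y) f(y) g(x) dμ(y) dν(x)` of an integral kernel `K`, as an iterated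
integral. -/
def kernelPairing (K : X → Y → A) (μ : Measure Y) (ν : Measure X) (f : Y → A) (g : X → A) : A :=
  ∫ x, (∫ y, K x y * f y ∂μ) * g x ∂ν

lemma stronglyMeasurable_integral_kernel_mul {K : X → Y → A}
    (hK : StronglyMeasurable (Function.uncurry K)) (hf : Integrable f μ) :
    StronglyMeasurable fun x => ∫ y, K x y * f y ∂μ := by
  -- Joint measurability needs an s-finite measure, so `μ` is cut down to where `f` lives.
  obtain ⟨f', hf'meas, hff'⟩ := hf.aefinStronglyMeasurable
  obtain ⟨s, _, hf's, _⟩ := hf'meas.exists_set_sigmaFinite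
  have integral_eq (x : X) : ∫ y, K x y * f y ∂μ = ∫ y in s, K x y * f' y ∂μ := by
    rw [setIntegral_eq_integral_of_forall_compl_eq_zero fun y hy => by rw [hf's y hy, mul_zero]]
    exact integral_congr_ae (hff'.mono fun y hy => congrArg (K x y * ·) hy)
  simp only [integral_eq]
  exact (hK.mul (hf'meas.stronglyMeasurable.comp_measurable measurable_snd)).integral_prod_right

lemma norm_integral_kernel_mul_le {k : Y → A} {C : ℝ} (hk : ∀ y, ‖k y‖ ≤ C)
    (hf : Integrable f μ) : ‖∫ y, k y * f y ∂μ‖ ≤ C * ∫ y, ‖f y‖ ∂μ := by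
  rw [← integral_const_mul]
  exact norm_integral_le_of_norm_le (hf.norm.const_mul C) <|
    .of_forall fun y => norm_mul_le_of_le (hk y) le_rfl

lemma tendsto_integral_kernel_mul {l : Filter ι} [l.IsCountablyGenerated] {k : ι → Y → A}
    {k₀ : Y → A} {C : ℝ} (hk : ∀ᶠ i in l, AEStronglyMeasurable (k i) μ)
    (hbound : ∀ᶠ i in l, ∀ y, ‖k i y‖ ≤ C) (hlim : ∀ y, Tendsto (k · y) l (𝓝 (k₀ y)))
    (hf : Integrable f μ) :
    Tendsto (fun i => ∫ y, k i y * f y ∂μ) l (𝓝 (∫ y, k₀ y * f y ∂μ)) := by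
  refine tendsto_integral_filter_of_dominated_convergence (fun y => C * ‖f y‖)
    (hk.mono fun i hi => hi.mul hf.1) ?_ (hf.norm.const_mul C)
    (.of_forall fun y => (hlim y).mul_const (f y))
  filter_upwards [hbound] with i hi
  exact .of_forall fun y => norm_mul_le_of_le (hi y) le_rfl

theorem tendsto_kernelPairing {l : Filter ι} [l.IsCountablyGenerated] {K : ι → X → Y → A}
    {K₀ : X → Y → A} {C : ℝ} (hK : ∀ᶠ i in l, StronglyMeasurable (Function.uncurry (K i)))
    (hbound : ∀ᶠ i in l, ∀ x y, ‖K i x y‖ ≤ C)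
    (hlim : ∀ x y, Tendsto (K · x y) l (𝓝 (K₀ x y)))
    (hf : Integrable f μ) (hg : Integrable g ν) :
    Tendsto (fun i => kernelPairing (K i) μ ν f g) l (𝓝 (kernelPairing K₀ μ ν f g)) := by
  refine tendsto_integral_filter_of_dominated_convergence
    (fun x => (C * ∫ y, ‖f y‖ ∂μ) * ‖g x‖) ?measurable ?dominated (hg.norm.const_mul _) ?limit
  case measurable =>
    filter_upwards [hK] with i hi
    exact (stronglyMeasurable_integral_kernel_mul hi hf).aestronglyMeasurable.mul hg.1
  case dominated =>
    filter_upwards [hbound] with i hi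
    exact .of_forall fun x => norm_mul_le_of_le (norm_integral_kernel_mul_le (hi x) hf) le_rfl
  case limit =>
    refine .of_forall fun x => Tendsto.mul_const (g x) ?_
    exact tendsto_integral_kernel_mul
      (hK.mono fun i hi => (hi.comp_measurable measurable_prodMk_left).aestronglyMeasurable)
      (hbound.mono fun i hi => hi x) (hlim x) hf

end KernelPairing

/-- The Hilbert kernel `(x - y)⁻¹` truncated to the pairs whose distance `|x - y|` lies in `s`;
`s = Ioi ε` and `s = Ici ε` are the strict and non-strict truncations at `ε`. -/
def truncHilbertKernel (s : Set ℝ) (x y : ℝ) : ℝ :=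
  (abs ⁻¹' s).indicator Inv.inv (x - y)

lemma truncHilbertKernel_apply (s : Set ℝ) [DecidablePred (· ∈ s)] (x y : ℝ) :
    truncHilbertKernel s x y = if |x - y| ∈ s then (x - y)⁻¹ else 0 := by
  split_ifs with hxy
  · exact indicator_of_mem (s := abs ⁻¹' s) hxy _
  · exact indicator_of_notMem (s := abs ⁻¹' s) hxy _

lemma truncPairing_eq_kernelPairing (σ w : Measure ℝ) (f g : ℝ → ℝ) (ε : ℝ) :
    truncPairing σ w f g ε = kernelPairing (truncHilbertKernel (Ioi ε)) σ w f g := by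
  simp only [truncPairing, kernelPairing, truncHilbertKernel_apply, mem_Ioi, ite_mul, zero_mul]

lemma truncPairingGe_eq_kernelPairing (σ w : Measure ℝ) (f g : ℝ → ℝ) (ε : ℝ) :
    truncPairingGe σ w f g ε = kernelPairing (truncHilbertKernel (Ici ε)) σ w f g := by
  simp only [truncPairingGe, kernelPairing, truncHilbertKernel_apply, mem_Ici, ite_mul, zero_mul]

lemma stronglyMeasurable_truncHilbertKernel {s : Set ℝ} (hs : MeasurableSet s) :
    StronglyMeasurable (Function.uncurry (truncHilbertKernel s)) :=
  ((measurable_inv.indicator (measurable_norm hs)).comp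
    (measurable_fst.sub measurable_snd)).stronglyMeasurable

lemma norm_truncHilbertKernel_le {s : Set ℝ} {δ : ℝ} (hδ : 0 < δ) (hs : s ⊆ Ici δ) (x y : ℝ) :
    ‖truncHilbertKernel s x y‖ ≤ δ⁻¹ := by
  rw [truncHilbertKernel, norm_indicator_eq_indicator_norm]
  refine indicator_apply_le' (fun hxy => ?_) fun _ => (inv_pos.2 hδ).le
  rw [norm_inv]
  exact inv_anti₀ hδ (hs hxy)

theorem tendsto_kernelPairing_truncHilbertKernel {ι : Type*} {l : Filter ι}
    [l.IsCountablyGenerated] {s : ι → Set ℝ} {s₀ : Set ℝ} {σ w : Measure ℝ} {f g : ℝ → ℝ} {δ : ℝ}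
    (hδ : 0 < δ) (hs : ∀ᶠ i in l, MeasurableSet (s i)) (hsδ : ∀ᶠ i in l, s i ⊆ Ici δ)
    (hlim : ∀ r, ∀ᶠ i in l, (r ∈ s i ↔ r ∈ s₀)) (hf : Integrable f σ) (hg : Integrable g w) :
    Tendsto (fun i => kernelPairing (truncHilbertKernel (s i)) σ w f g) l
      (𝓝 (kernelPairing (truncHilbertKernel s₀) σ w f g)) := by
  refine tendsto_kernelPairing (hs.mono fun _ => stronglyMeasurable_truncHilbertKernel)
    (hsδ.mono fun _ => norm_truncHilbertKernel_le hδ) (fun x y => ?_) hf hg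
  classical
  refine tendsto_const_nhds.congr' ?_
  filter_upwards [hlim |x - y|] with i hi
  simp only [truncHilbertKernel_apply, hi]

section OneSidedLimits

variable {α : Type*} [LinearOrder α] [TopologicalSpace α]

lemma eventually_nhdsGE_mem_Ioi_iff [ClosedIciTopology α] (a r : α) :
    ∀ᶠ t in 𝓝[≥] a, (r ∈ Ioi t ↔ r ∈ Ioi a) := by
  rcases lt_or_ge a r with har | hra
  · filter_upwards [nhdsWithin_le_nhds (Iio_mem_nhds har)] with t htr
    exact iff_of_true htr har
  · filter_upwards [self_mem_nhdsWithin] with t hat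
    exact iff_of_false (hra.trans hat).not_gt hra.not_gt

lemma eventually_nhdsLT_mem_Ioi_iff [ClosedIicTopology α] (a r : α) :
    ∀ᶠ t in 𝓝[<] a, (r ∈ Ioi t ↔ r ∈ Ici a) := by
  rcases le_or_gt a r with har | hra
  · filter_upwards [self_mem_nhdsWithin] with t hta
    exact iff_of_true (hta.trans_le har) har
  · filter_upwards [nhdsWithin_le_nhds (Ioi_mem_nhds hra)] with t hrt
    exact iff_of_false hrt.le.not_gt hra.not_ge

end OneSidedLimits

theorem statement7_general (σ w : Measure ℝ) {f g : ℝ → ℝ} (hf : Integrable f σ)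
    (hg : Integrable g w) {ε : ℝ} (hε : 0 < ε) :
    ContinuousWithinAt (truncPairing σ w f g) (Ici ε) ε ∧
    Tendsto (truncPairing σ w f g) (𝓝[<] ε) (𝓝 (truncPairingGe σ w f g ε)) := by
  have away_from_zero : ∀ᶠ t in 𝓝 ε, Ioi t ⊆ Ici (ε / 2) := by
    filter_upwards [Ioi_mem_nhds (half_lt_self hε)] with t ht
    exact (Ioi_subset_Ioi (mem_Ioi.1 ht).le).trans Ioi_subset_Ici_self
  have measurable_Ioi {l : Filter ℝ} : ∀ᶠ t in l, MeasurableSet (Ioi t) :=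
    .of_forall fun _ => measurableSet_Ioi
  simp only [ContinuousWithinAt, funext (truncPairing_eq_kernelPairing σ w f g),
    truncPairingGe_eq_kernelPairing]
  exact ⟨tendsto_kernelPairing_truncHilbertKernel (half_pos hε) measurable_Ioi
      (nhdsWithin_le_nhds away_from_zero) (eventually_nhdsGE_mem_Ioi_iff ε) hf hg,
    tendsto_kernelPairing_truncHilbertKernel (half_pos hε) measurable_Ioi
      (nhdsWithin_le_nhds away_from_zero) (eventually_nhdsLT_mem_Ioi_iff ε) hf hg⟩

theorem statement7 (σ w : Measure ℝ) [IsLocallyFiniteMeasure σ] [IsLocallyFiniteMeasure w]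
    (f g : ℝ → ℝ) (hf : InF f) (hg : InF g) (ε : ℝ) (hε : 0 < ε) :
    -- right-continuity at `ε`:
    ContinuousWithinAt (truncPairing σ w f g) (Set.Ici ε) ε ∧
    -- existence and identification of the left limit at `ε`:
    Filter.Tendsto (truncPairing σ w f g) (𝓝[<] ε) (𝓝 (truncPairingGe σ w f g ε)) :=
  statement7_general σ w (hf.integrable σ) (hg.integrable w) hε
end
end

section
/- Let σ and w be Radon measures on ℝ with finite Muckenhoupt–Poisson constants [σ,w]_{A₂}* and [w,σ]_{A₂}*, and let f, g ∈ 𝓕 be supported on disjoint intervals. Then the double integral ∬ (x−y)⁻¹ f(y) g(x) dσ(y) dw(x) converges absolutely, and lim_{ε→0} B_ε(f,g) = ∬ (x−y)⁻¹ f(y) g(x) dσ(y) dw(x). -/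
/-! The `A₂` condition says that the Hilbert kernel `(x - y)⁻¹` lies in weak `L²(w ⊗ σ)` on a
product `J × I` of disjoint intervals. Indeed, if `x ∈ J` and `y ∈ I` are at distance less than `t`,
then `y` lies in the part `Y` of `I` within `t` of `J`. This is an interval of length at most `t`,
because `I` and `J` are disjoint, and `x` is outside `Y` but within `3t/2` of its center. Testing
`A₂` on `Y` gives `(w ⊗ σ){(x, y) ∈ J × I : |x - y| < t} ≤ (3/2)² A² t²`. In particular the pairs at
bounded distance have finite mass, and on a finite measure space weak `L²` is contained in `L¹`.
Truncations of an integrable function converge by dominated convergence, and Fubini's theorem turns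
the double integrals into iterated ones. -/

open MeasureTheory Set Filter
open scoped ENNReal Topology

noncomputable section

/-- The iterated-integral Hilbert pairing `∬ f(y) g(x) (x-y)⁻¹ dσ(y) dw(x)`. -/
def hilbertPairing (σ w : Measure ℝ) (f g : ℝ → ℝ) : ℝ :=
  ∫ x, (∫ y, f y * (x - y)⁻¹ ∂σ) * g x ∂w

/-- `f` and `g` are supported on disjoint intervals. -/
def DisjointlySupported (f g : ℝ → ℝ) : Prop :=
  ∃ I J : Set ℝ, I.OrdConnected ∧ J.OrdConnected ∧ Disjoint I J ∧
    Function.support f ⊆ I ∧ Function.support g ⊆ J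

section InF

variable {f : ℝ → ℝ}

lemma InF.measurable (hf : InF f) : Measurable f := by
  induction hf using Submodule.span_induction with
  | mem f h =>
    obtain ⟨a, b, rfl⟩ := h
    exact measurable_one.indicator measurableSet_Ico
  | zero => exact measurable_zero
  | add f g _ _ hf hg => exact hf.add hg
  | smul c f _ hf => exact hf.const_smul c

lemma InF.exists_norm_le (hf : InF f) : ∃ C, ∀ x, ‖f x‖ ≤ C := by
  induction hf using Submodule.span_induction with
  | mem f h =>
    obtain ⟨a, b, rfl⟩ := h
    exact ⟨1, fun x ↦ (norm_indicator_le_norm_self _ x).trans (by simp)⟩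
  | zero => exact ⟨0, by simp⟩
  | add f g _ _ hf hg =>
    obtain ⟨C, hC⟩ := hf
    obtain ⟨D, hD⟩ := hg
    exact ⟨C + D, fun x ↦ norm_add_le_of_le (hC x) (hD x)⟩
  | smul c f _ hf =>
    obtain ⟨C, hC⟩ := hf
    exact ⟨‖c‖ * C, fun x ↦ (norm_smul_le c (f x)).trans (by gcongr; exact hC x)⟩

lemma InF.isBounded_support (hf : InF f) : Bornology.IsBounded (Function.support f) := by
  induction hf using Submodule.span_induction with
  | mem f h =>
    obtain ⟨a, b, rfl⟩ := h
    exact (Metric.isBounded_Ico a b).subset support_indicator_subset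
  | zero => simp
  | add f g _ _ hf hg => exact (hf.union hg).subset (Function.support_add f g)
  | smul c f _ hf => exact hf.subset (Function.support_const_smul_subset c f)

end InF

section Intervals

lemma abs_sub_center_le_diam_div_two {s : Set ℝ} (hs : Bornology.IsBounded s) {y : ℝ}
    (hy : y ∈ s) : |y - (sInf s + sSup s) / 2| ≤ Metric.diam s / 2 := by
  have := csInf_le hs.bddBelow hy
  have := le_csSup hs.bddAbove hy
  rw [Real.diam_eq hs, abs_le]
  constructor <;> linarith

lemma center_mem_of_ordConnected {s : Set ℝ} (hs : s.OrdConnected) (hne : s.Nonempty)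
    (hb : Bornology.IsBounded s) : (sInf s + sSup s) / 2 ∈ s := by
  obtain ⟨y, hy⟩ := hne
  have hinf : sInf s ≤ y := csInf_le hb.bddBelow hy
  have hsup : y ≤ sSup s := le_csSup hb.bddAbove hy
  rcases (hinf.trans hsup).eq_or_lt with heq | hlt
  · rwa [show (sInf s + sSup s) / 2 = y by linarith]
  · have hconn : IsConnected s := ⟨⟨y, hy⟩, hs.isPreconnected⟩
    exact hconn.Ioo_csInf_csSup_subset hb.bddBelow hb.bddAbove
      ⟨left_lt_add_div_two.2 hlt, add_div_two_lt_right.2 hlt⟩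

variable {I J : Set ℝ}

lemma ordConnected_inter_thickening (hI : I.OrdConnected) (hJ : J.OrdConnected) (t : ℝ) :
    (I ∩ Metric.thickening t J).OrdConnected :=
  hI.inter (hJ.convex.thickening t).ordConnected

lemma dist_lt_of_mem_inter_thickening (hI : I.OrdConnected) (hJ : J.OrdConnected)
    (hIJ : Disjoint I J) {t y z : ℝ} (hy : y ∈ I ∩ Metric.thickening t J)
    (hz : z ∈ I ∩ Metric.thickening t J) : dist y z < t := by
  wlog hyz : y ≤ z generalizing y z
  · rw [dist_comm]
    exact this hz hy (le_of_not_ge hyz)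
  obtain ⟨hyI, hyt⟩ := hy
  obtain ⟨hzI, hzt⟩ := hz
  obtain ⟨a, haJ, hya⟩ := Metric.mem_thickening_iff.1 hyt
  obtain ⟨b, hbJ, hzb⟩ := Metric.mem_thickening_iff.1 hzt
  have outside : ∀ x ∈ J, x < y ∨ z < x := fun x hx ↦ by
    by_contra! h
    exact hIJ.notMem_of_mem_left (hI.out hyI hzI h) hx
  rw [Real.dist_eq, abs_lt] at hya hzb ⊢
  rcases outside a haJ with hay | hza
  · rcases outside b hbJ with hby | hzb'
    · constructor <;> linarith
    · exact absurd (hJ.out haJ hbJ ⟨hay.le, hyz.trans hzb'.le⟩) (hIJ.notMem_of_mem_left hyI)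
  · constructor <;> linarith

end Intervals

section WeakType

variable {α E : Type*} [MeasurableSpace α] {μ : Measure α} [NormedAddCommGroup E]

lemma integrable_of_measure_lt_norm_le_rpow [IsFiniteMeasure μ] {f : α → E}
    (hf : AEStronglyMeasurable f μ) {p C : ℝ} (hp : 1 < p)
    (h : ∀ t > 0, μ {a | t < ‖f a‖} ≤ ENNReal.ofReal (C * t ^ (-p))) : Integrable f μ := by
  refine ⟨hf, (hasFiniteIntegral_iff_norm f).2 ?_⟩
  rw [lintegral_eq_lintegral_meas_lt μ (ae_of_all _ fun _ ↦ norm_nonneg _) hf.norm.aemeasurable,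
    ← Ioc_union_Ioi_eq_Ioi zero_le_one]
  refine (lintegral_union_le _ _ _).trans_lt (ENNReal.add_lt_top.2 ⟨?_, ?_⟩)
  · calc ∫⁻ t in Ioc (0 : ℝ) 1, μ {a | t < ‖f a‖}
        ≤ ∫⁻ _ in Ioc (0 : ℝ) 1, μ univ := lintegral_mono fun _ ↦ measure_mono (subset_univ _)
      _ < ∞ := by simp [measure_lt_top]
  · have tail : IntegrableOn (fun t : ℝ ↦ C * t ^ (-p)) (Ioi 1) :=
      (integrableOn_Ioi_rpow_of_lt (by linarith) one_pos).const_mul C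
    calc ∫⁻ t in Ioi (1 : ℝ), μ {a | t < ‖f a‖}
        ≤ ∫⁻ t in Ioi (1 : ℝ), ENNReal.ofReal (C * t ^ (-p)) :=
          setLIntegral_mono' measurableSet_Ioi fun t ht ↦ h t (one_pos.trans ht)
      _ < ∞ := tail.lintegral_lt_top

variable [NormedSpace ℝ E]

lemma tendsto_setIntegral_lt {f : α → E} (hf : Integrable f μ) {ρ : α → ℝ} (hρ : Measurable ρ)
    (a : ℝ) :
    Tendsto (fun ε ↦ ∫ x in {x | ε < ρ x}, f x ∂μ) (𝓝[>] a) (𝓝 (∫ x in {x | a < ρ x}, f x ∂μ)) := by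
  have meas (ε : ℝ) : MeasurableSet {x | ε < ρ x} := measurableSet_lt measurable_const hρ
  have cover : AECover (μ.restrict {x | a < ρ x}) (𝓝[>] a) fun ε ↦ {x | ε < ρ x} :=
    { ae_eventually_mem := (ae_restrict_iff' (meas a)).2 <| ae_of_all _ fun _ hx ↦
        mem_nhdsWithin_of_mem_nhds (Iio_mem_nhds hx)
      measurableSet := meas }
  refine (cover.integral_tendsto_of_countably_generated hf.restrict).congr' ?_
  filter_upwards [self_mem_nhdsWithin] with ε hε
  have subset : {x | ε < ρ x} ⊆ {x | a < ρ x} := fun x (hx : ε < ρ x) ↦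
    show a < ρ x from lt_trans hε hx
  rw [Measure.restrict_restrict_of_subset subset]

end WeakType

section A2

variable {σ w : Measure ℝ} {A : ℝ} {I J : Set ℝ}

lemma A2star.measure_mul_le (hA : A2star σ w A) (hI : I.OrdConnected)
    (hb : Bornology.IsBounded I) {S : Set ℝ} (hS : Disjoint S I) {r : ℝ} (hr : 0 < r)
    (hSr : ∀ x ∈ S, |x - (sInf I + sSup I) / 2| ≤ r) :
    σ I * w S ≤ ENNReal.ofReal (A ^ 2 * r ^ 2) := by
  rcases I.eq_empty_or_nonempty with rfl | hne
  · simp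
  set c := (sInf I + sSup I) / 2
  have inv_sq_le : ∀ x ∈ S, (r ^ 2)⁻¹ ≤ ((x - c) ^ 2)⁻¹ := fun x hx ↦ by
    -- At the center the right-hand side would be `0⁻¹ = 0`.
    have hxc : x ≠ c := fun h ↦ hS.notMem_of_mem_left hx (h ▸ center_mem_of_ordConnected hI hne hb)
    exact inv_anti₀ (sq_pos_of_ne_zero (sub_ne_zero.2 hxc)) (sq_le_sq' (abs_le.1 (hSr x hx)).1
      (abs_le.1 (hSr x hx)).2)
  have lower : ENNReal.ofReal ((r ^ 2)⁻¹) * w S ≤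
      ∫⁻ x in Iᶜ, ENNReal.ofReal (((x - c) ^ 2)⁻¹) ∂w := by
    rw [← setLIntegral_const]
    exact (setLIntegral_mono (by fun_prop) fun x hx ↦
      ENNReal.ofReal_le_ofReal (inv_sq_le x hx)).trans (lintegral_mono_set hS.subset_compl_right)
  have hr2 : 0 < r ^ 2 := by positivity
  calc σ I * w S
      = σ I * (ENNReal.ofReal ((r ^ 2)⁻¹) * w S) * ENNReal.ofReal (r ^ 2) := by
        rw [mul_assoc, mul_right_comm, ← ENNReal.ofReal_mul (by positivity),
          inv_mul_cancel₀ hr2.ne', ENNReal.ofReal_one, one_mul]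
    _ ≤ ENNReal.ofReal (A ^ 2) * ENNReal.ofReal (r ^ 2) := by
        gcongr
        exact (mul_le_mul_right lower _).trans (hA I hI hb)
    _ = ENNReal.ofReal (A ^ 2 * r ^ 2) := (ENNReal.ofReal_mul (sq_nonneg A)).symm

lemma A2star.measure_inter_thickening_mul_le (hA : A2star σ w A) (hI : I.OrdConnected)
    (hJ : J.OrdConnected) (hIJ : Disjoint I J) {t : ℝ} (ht : 0 < t) :
    σ (I ∩ Metric.thickening t J) * w (J ∩ Metric.thickening t I) ≤
      ENNReal.ofReal (A ^ 2 * (3 / 2 * t) ^ 2) := by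
  set Y := I ∩ Metric.thickening t J
  have dist_le : ∀ y ∈ Y, ∀ z ∈ Y, dist y z ≤ t := fun y hy z hz ↦
    (dist_lt_of_mem_inter_thickening hI hJ hIJ hy hz).le
  have hb : Bornology.IsBounded Y := Metric.isBounded_iff.2 ⟨t, fun y hy z hz ↦ dist_le y hy z hz⟩
  refine hA.measure_mul_le (ordConnected_inter_thickening hI hJ t) hb
    (hIJ.symm.mono inter_subset_left inter_subset_left) (by positivity) ?_
  rintro x ⟨hxJ, hxt⟩
  obtain ⟨y, hyI, hxy⟩ := Metric.mem_thickening_iff.1 hxt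
  have hy : y ∈ Y := ⟨hyI, Metric.mem_thickening_iff.2 ⟨x, hxJ, dist_comm x y ▸ hxy⟩⟩
  calc |x - (sInf Y + sSup Y) / 2|
      ≤ |x - y| + |y - (sInf Y + sSup Y) / 2| := abs_sub_le _ _ _
    _ ≤ t + Metric.diam Y / 2 := add_le_add hxy.le (abs_sub_center_le_diam_div_two hb hy)
    _ ≤ 3 / 2 * t := by linarith [Metric.diam_le_of_forall_dist_le ht.le dist_le]

variable [SFinite σ]

lemma A2star.prod_measure_dist_lt_le (hA : A2star σ w A) (hI : I.OrdConnected)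
    (hJ : J.OrdConnected) (hIJ : Disjoint I J) {t : ℝ} (ht : 0 < t) :
    (w.prod σ) (J ×ˢ I ∩ {p | dist p.1 p.2 < t}) ≤ ENNReal.ofReal (A ^ 2 * (3 / 2 * t) ^ 2) := by
  have near : J ×ˢ I ∩ {p | dist p.1 p.2 < t} ⊆
      (J ∩ Metric.thickening t I) ×ˢ (I ∩ Metric.thickening t J) := by
    rintro ⟨x, y⟩ ⟨⟨hx, hy⟩, hxy : dist x y < t⟩
    exact ⟨⟨hx, Metric.mem_thickening_iff.2 ⟨y, hy, hxy⟩⟩,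
      ⟨hy, Metric.mem_thickening_iff.2 ⟨x, hx, dist_comm x y ▸ hxy⟩⟩⟩
  refine (measure_mono near).trans ?_
  rw [Measure.prod_prod, mul_comm]
  exact hA.measure_inter_thickening_mul_le hI hJ hIJ ht

lemma A2star.integrableOn_inv_sub (hA : A2star σ w A) (hI : I.OrdConnected)
    (hJ : J.OrdConnected) (hIJ : Disjoint I J) {R : ℝ} (hR : 0 < R) :
    IntegrableOn (fun p : ℝ × ℝ ↦ (p.1 - p.2)⁻¹) (J ×ˢ I ∩ {p | dist p.1 p.2 < R})
      (w.prod σ) := by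
  set Q : Set (ℝ × ℝ) := J ×ˢ I ∩ {p | dist p.1 p.2 < R}
  have : IsFiniteMeasure ((w.prod σ).restrict Q) := isFiniteMeasure_restrict.2
    ((hA.prod_measure_dist_lt_le hI hJ hIJ hR).trans_lt ENNReal.ofReal_lt_top).ne
  have hmeas : Measurable fun p : ℝ × ℝ ↦ (p.1 - p.2)⁻¹ := by fun_prop
  refine integrable_of_measure_lt_norm_le_rpow hmeas.aestronglyMeasurable one_lt_two
    (C := A ^ 2 * (3 / 2) ^ 2) fun t ht ↦ ?_
  have superlevel_subset : {p : ℝ × ℝ | t < ‖(p.1 - p.2)⁻¹‖} ⊆ {p | dist p.1 p.2 < t⁻¹} :=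
    fun p (hp : t < ‖(p.1 - p.2)⁻¹‖) ↦ by
      rw [norm_inv] at hp
      exact lt_inv_of_lt_inv₀ ht hp
  calc (w.prod σ).restrict Q {p | t < ‖(p.1 - p.2)⁻¹‖}
      = (w.prod σ) ({p | t < ‖(p.1 - p.2)⁻¹‖} ∩ Q) :=
        Measure.restrict_apply (measurableSet_lt measurable_const hmeas.norm)
    _ ≤ (w.prod σ) (J ×ˢ I ∩ {p | dist p.1 p.2 < t⁻¹}) :=
        measure_mono fun p hp ↦ ⟨hp.2.1, superlevel_subset hp.1⟩
    _ ≤ ENNReal.ofReal (A ^ 2 * (3 / 2 * t⁻¹) ^ 2) :=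
        hA.prod_measure_dist_lt_le hI hJ hIJ (inv_pos.2 ht)
    _ = ENNReal.ofReal (A ^ 2 * (3 / 2) ^ 2 * t ^ (-2 : ℝ)) := by
        rw [Real.rpow_neg ht.le, Real.rpow_two]
        ring_nf

end A2

/-- The integrand `(x - y)⁻¹ f(y) g(x)` of the Hilbert pairing, as a function of `p = (x, y)`, to be
integrated against `w ⊗ σ`. On the diagonal it is `0`, since `0⁻¹ = 0`. -/
def hilbertIntegrand (f g : ℝ → ℝ) (p : ℝ × ℝ) : ℝ := (p.1 - p.2)⁻¹ * f p.2 * g p.1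

section HilbertIntegrand

variable {σ w : Measure ℝ} [SFinite σ] {f g : ℝ → ℝ}

lemma A2star.integrable_hilbertIntegrand {A : ℝ} (hA : A2star σ w A) (hfm : Measurable f)
    (hgm : Measurable g) (hfb : ∃ C, ∀ y, ‖f y‖ ≤ C) (hgb : ∃ C, ∀ x, ‖g x‖ ≤ C)
    (hfs : Bornology.IsBounded (Function.support f))
    (hgs : Bornology.IsBounded (Function.support g)) (hd : DisjointlySupported f g) :
    Integrable (hilbertIntegrand f g) (w.prod σ) := by
  obtain ⟨I, J, hI, hJ, hIJ, hfI, hgJ⟩ := hd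
  obtain ⟨C, hC⟩ := hfb
  obtain ⟨D, hD⟩ := hgb
  obtain ⟨R₀, hdist⟩ := Metric.isBounded_iff.1 (hgs.union hfs)
  obtain ⟨R, hR, hR₀⟩ : ∃ R > 0, R₀ < R := ⟨max R₀ 0 + 1, by positivity, by grind⟩
  have support_subset : Function.support (hilbertIntegrand f g) ⊆
      J ×ˢ I ∩ {p | dist p.1 p.2 < R} := fun p hp ↦ by
    have hf : p.2 ∈ Function.support f := right_ne_zero_of_mul (left_ne_zero_of_mul hp)
    have hg : p.1 ∈ Function.support g := right_ne_zero_of_mul hp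
    exact ⟨⟨hgJ hg, hfI hf⟩, (hdist (.inl hg) (.inr hf)).trans_lt hR₀⟩
  rw [← integrableOn_iff_integrable_of_support_subset support_subset]
  exact ((hA.integrableOn_inv_sub hI hJ hIJ hR).mul_bdd
    (hfm.comp measurable_snd).aestronglyMeasurable (ae_of_all _ fun p ↦ hC p.2)).mul_bdd
    (hgm.comp measurable_fst).aestronglyMeasurable (ae_of_all _ fun p ↦ hD p.1)

lemma lintegral_lintegral_abs_ne_top (h : Integrable (hilbertIntegrand f g) (w.prod σ)) :
    ∫⁻ x, (∫⁻ y, ENNReal.ofReal |(x - y)⁻¹ * f y| ∂σ) * ENNReal.ofReal |g x| ∂w ≠ ∞ := by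
  convert h.2.ne using 1
  rw [lintegral_prod _ h.aestronglyMeasurable.enorm]
  refine lintegral_congr fun x ↦ ?_
  rw [← lintegral_mul_const' _ _ ENNReal.ofReal_ne_top]
  simp only [hilbertIntegrand, enorm_mul _ (g x), Real.enorm_eq_ofReal_abs]

variable [SFinite w]

lemma hilbertPairing_eq_integral (h : Integrable (hilbertIntegrand f g) (w.prod σ)) :
    hilbertPairing σ w f g = ∫ p, hilbertIntegrand f g p ∂w.prod σ := by
  rw [integral_prod _ h]
  simp only [hilbertPairing, hilbertIntegrand, integral_mul_const, mul_comm (f _)]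

lemma truncPairing_eq_setIntegral (h : Integrable (hilbertIntegrand f g) (w.prod σ)) (ε : ℝ) :
    truncPairing σ w f g ε =
      ∫ p in {p | ε < |p.1 - p.2|}, hilbertIntegrand f g p ∂w.prod σ := by
  have meas : MeasurableSet {p : ℝ × ℝ | ε < |p.1 - p.2|} :=
    measurableSet_lt (by fun_prop) (by fun_prop)
  rw [← integral_indicator meas, integral_prod _ (h.indicator meas), truncPairing]
  refine integral_congr_ae (ae_of_all _ fun x ↦ ?_)
  simp only [← integral_mul_const, indicator_apply, mem_ofPred_eq, hilbertIntegrand, ite_mul,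
    zero_mul]

lemma tendsto_truncPairing (h : Integrable (hilbertIntegrand f g) (w.prod σ)) :
    Tendsto (truncPairing σ w f g) (𝓝[>] 0) (𝓝 (hilbertPairing σ w f g)) := by
  have off_diagonal : ∫ p in {p | 0 < |p.1 - p.2|}, hilbertIntegrand f g p ∂w.prod σ =
      ∫ p, hilbertIntegrand f g p ∂w.prod σ := by
    refine setIntegral_eq_integral_of_forall_compl_eq_zero fun p hp ↦ ?_
    have hp0 : p.1 - p.2 = 0 := by simpa using hp
    simp [hilbertIntegrand, hp0]
  rw [hilbertPairing_eq_integral h, ← off_diagonal, funext (truncPairing_eq_setIntegral h)]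
  exact tendsto_setIntegral_lt h (by fun_prop) 0

end HilbertIntegrand

theorem statement9_general (σ w : Measure ℝ) [SFinite σ] [SFinite w] (A : ℝ)
    (hA : A2star σ w A) (f g : ℝ → ℝ) (hfm : Measurable f) (hgm : Measurable g)
    (hfb : ∃ C, ∀ y, ‖f y‖ ≤ C) (hgb : ∃ C, ∀ x, ‖g x‖ ≤ C)
    (hfs : Bornology.IsBounded (Function.support f))
    (hgs : Bornology.IsBounded (Function.support g)) (hd : DisjointlySupported f g) :
    (∫⁻ x, (∫⁻ y, ENNReal.ofReal |(x - y)⁻¹ * f y| ∂σ) * ENNReal.ofReal |g x| ∂w ≠ ∞) ∧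
    Tendsto (truncPairing σ w f g) (𝓝[>] 0) (𝓝 (hilbertPairing σ w f g)) :=
  have h := hA.integrable_hilbertIntegrand hfm hgm hfb hgb hfs hgs hd
  ⟨lintegral_lintegral_abs_ne_top h, tendsto_truncPairing h⟩

theorem statement9 (σ w : Measure ℝ) [IsLocallyFiniteMeasure σ] [IsLocallyFiniteMeasure w]
    (A A' : ℝ) (hA : A2star σ w A) (hA' : A2star w σ A')
    (f g : ℝ → ℝ) (hf : InF f) (hg : InF g) (hd : DisjointlySupported f g) :
    -- absolute convergence of the double integral:
    (∫⁻ x, (∫⁻ y, ENNReal.ofReal |(x - y)⁻¹ * f y| ∂σ) * ENNReal.ofReal |g x| ∂w ≠ ⊤) ∧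
    -- convergence of the truncations:
    Filter.Tendsto (truncPairing σ w f g) (𝓝[>] (0 : ℝ))
      (𝓝 (hilbertPairing σ w f g)) :=
  statement9_general σ w A hA f g hf.measurable hg.measurable hf.exists_norm_le
    hg.exists_norm_le hf.isBounded_support hg.isBounded_support hd
end
end

section
/- Let t ∈ ℝ, let w be a Borel measure on [t,∞), and let α ∈ (0,1). Then ∫_{[t,∞)} w([x,∞))^{−α} dw(x) ≤ w([t,∞))^{1−α} / (1−α). -/
open MeasureTheory Set
open scoped ENNReal

/-!
For a finite measure `μ` of total mass `M`, the tail `G x = μ [x, ∞)` under `μ` stochastically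
dominates the identity under Lebesgue measure on `(0, M)`, as in the probability integral transform:
if `L` is a lower set of values, then `{G ∈ L}` is an upper set, so its measure is the supremum of
`μ [a, ∞) = G a` over its points `a`, and each such `G a` is the length of the interval
`(0, G a) ⊆ L ∩ (0, M)`. Comparing the superlevel sets of an antitone `φ` gives
`∫ φ(G) dμ ≤ ∫₀ᴹ φ(s) ds`. The theorem is the case `φ(s) = s ^ (-α)`, applied to the restriction of
`w` to `[t, ∞)`.
-/

lemma volume_setOf_ofReal_lt_and_pos (a : ℝ≥0∞) :
    volume {y : ℝ | ENNReal.ofReal y < a ∧ 0 < y} = a := by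
  induction a with
  | top =>
    simp only [ENNReal.ofReal_lt_top, true_and]
    exact Real.volume_Ioi
  | coe a =>
    have hIoo : {y : ℝ | ENNReal.ofReal y < a ∧ 0 < y} = Ioo 0 (a : ℝ) := by
      ext y
      simp +contextual [and_comm, ENNReal.ofReal_lt_iff_lt_toReal, le_of_lt]
    rw [hIoo, Real.volume_Ioo, sub_zero, ENNReal.ofReal_coe_nnreal]

lemma lintegral_eq_lintegral_measure_ofReal_lt {Ω : Type*} [MeasurableSpace Ω] (μ : Measure Ω)
    [SFinite μ] {f : Ω → ℝ≥0∞} (hf : Measurable f) :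
    ∫⁻ x, f x ∂μ = ∫⁻ y in Ioi 0, μ {x | ENNReal.ofReal y < f x} := by
  have hsubgraph : MeasurableSet {p : Ω × ℝ | ENNReal.ofReal p.2 < f p.1} :=
    measurableSet_lt (by fun_prop) (by fun_prop)
  calc ∫⁻ x, f x ∂μ
      = ∫⁻ x, volume.restrict (Ioi 0) {y : ℝ | ENNReal.ofReal y < f x} ∂μ := by
        refine lintegral_congr fun x => ?_
        rw [Measure.restrict_apply' measurableSet_Ioi]
        exact (volume_setOf_ofReal_lt_and_pos (f x)).symm
    _ = μ.prod (volume.restrict (Ioi 0)) {p | ENNReal.ofReal p.2 < f p.1} :=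
        (Measure.prod_apply hsubgraph).symm
    _ = ∫⁻ y in Ioi 0, μ {x | ENNReal.ofReal y < f x} := Measure.prod_apply_symm hsubgraph

lemma lintegral_Ioo_ofReal_rpow {r : ℝ} (hr : -1 < r) {m : ℝ} (hm : 0 ≤ m) :
    ∫⁻ s in Ioo 0 m, ENNReal.ofReal s ^ r =
      ENNReal.ofReal m ^ (r + 1) / ENNReal.ofReal (r + 1) := by
  have hr' : 0 < r + 1 := by linarith
  have hint : IntegrableOn (fun s : ℝ => s ^ r) (Ioo 0 m) :=
    (intervalIntegrable_iff_integrableOn_Ioo_of_le hm).1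
      (intervalIntegral.intervalIntegrable_rpow' hr)
  calc ∫⁻ s in Ioo 0 m, ENNReal.ofReal s ^ r
      = ∫⁻ s in Ioo 0 m, ENNReal.ofReal (s ^ r) :=
        setLIntegral_congr_fun measurableSet_Ioo fun s hs => ENNReal.ofReal_rpow_of_pos hs.1
    _ = ENNReal.ofReal (∫ s in Ioo 0 m, s ^ r) := by
        refine (ofReal_integral_eq_lintegral_ofReal hint ?_).symm
        filter_upwards [ae_restrict_mem measurableSet_Ioo] with s hs
        exact Real.rpow_nonneg hs.1.le r
    _ = ENNReal.ofReal (m ^ (r + 1) / (r + 1)) := by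
        rw [← integral_Ioc_eq_integral_Ioo, ← intervalIntegral.integral_of_le hm,
          integral_rpow (Or.inl hr), Real.zero_rpow hr'.ne', sub_zero]
    _ = ENNReal.ofReal m ^ (r + 1) / ENNReal.ofReal (r + 1) := by
        rw [ENNReal.ofReal_div_of_pos hr', ENNReal.ofReal_rpow_of_nonneg hm hr'.le]

lemma antitone_measure_Ici {X : Type*} [Preorder X] [MeasurableSpace X] (μ : Measure X) :
    Antitone fun x => μ (Ici x) :=
  fun _ _ h => measure_mono (Ici_subset_Ici.2 h)

section UpperSet

variable {X : Type*} [LinearOrder X] [TopologicalSpace X] [ClosedIicTopology X]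
  [SecondCountableTopology X] [MeasurableSpace X]

lemma measure_eq_iSup_measure_Ici_of_isUpperSet (μ : Measure X) {U : Set X} (hU : IsUpperSet U) :
    μ U = ⨆ a ∈ U, μ (Ici a) := by
  refine le_antisymm ?_ (iSup₂_le fun a ha => measure_mono (hU.Ici_subset ha))
  by_cases hmin : ∃ m, IsLeast U m
  · obtain ⟨m, hm, hm_le⟩ := hmin
    exact (measure_mono hm_le).trans (le_iSup₂ (f := fun a _ => μ (Ici a)) m hm)
  · -- Without a minimum, `U` is the union of the open rays from its points; countably many suffice.
    obtain ⟨T, hTU, hT, hT_eq⟩ :=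
      TopologicalSpace.isOpen_biUnion_countable U Ioi fun _ _ => isOpen_Ioi
    have hcover : U ⊆ ⋃ a ∈ T, Ioi a := fun x hx => by
      obtain ⟨a, ha, hax⟩ : ∃ a ∈ U, a < x := by
        by_contra! h
        exact hmin ⟨x, hx, h⟩
      exact hT_eq ▸ mem_biUnion ha hax
    have hdir : DirectedOn (Function.onFun (· ⊆ ·) Ioi) T := fun a ha b hb =>
      (le_total a b).elim
        (fun h => ⟨a, ha, Subset.rfl, Ioi_subset_Ioi h⟩)
        (fun h => ⟨b, hb, Ioi_subset_Ioi h, Subset.rfl⟩)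
    calc μ U ≤ μ (⋃ a ∈ T, Ioi a) := measure_mono hcover
      _ = ⨆ a ∈ T, μ (Ioi a) := measure_biUnion_eq_iSup hT hdir
      _ ≤ ⨆ a ∈ T, μ (Ici a) := iSup₂_mono fun _ _ => measure_mono Ioi_subset_Ici_self
      _ ≤ ⨆ a ∈ U, μ (Ici a) := biSup_mono hTU

lemma measure_setOf_measure_Ici_mem_le (μ : Measure X) [IsFiniteMeasure μ] {L : Set ℝ≥0∞}
    (hL : IsLowerSet L) :
    μ {x | μ (Ici x) ∈ L} ≤ volume (ENNReal.ofReal ⁻¹' L ∩ Ioo 0 (μ.real univ)) := by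
  have hU : IsUpperSet {x | μ (Ici x) ∈ L} := fun _ _ h => hL (antitone_measure_Ici μ h)
  rw [measure_eq_iSup_measure_Ici_of_isUpperSet μ hU]
  refine iSup₂_le fun a ha => ?_
  have hsub : Ioo 0 (μ.real (Ici a)) ⊆ ENNReal.ofReal ⁻¹' L ∩ Ioo 0 (μ.real univ) := fun s hs =>
    ⟨hL ((ENNReal.ofReal_le_ofReal hs.2.le).trans_eq ofReal_measureReal) ha,
      hs.1, hs.2.trans_le (measureReal_mono (subset_univ _))⟩
  calc μ (Ici a) = volume (Ioo 0 (μ.real (Ici a))) := by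
        rw [Real.volume_Ioo, sub_zero, ofReal_measureReal]
    _ ≤ volume (ENNReal.ofReal ⁻¹' L ∩ Ioo 0 (μ.real univ)) := measure_mono hsub

end UpperSet

section Tail

variable {X : Type*} [LinearOrder X] [TopologicalSpace X] [OrderClosedTopology X]
  [SecondCountableTopology X] [MeasurableSpace X] [BorelSpace X]

lemma lintegral_antitone_measure_Ici_le (μ : Measure X) [IsFiniteMeasure μ] {φ : ℝ≥0∞ → ℝ≥0∞}
    (hφ : Antitone φ) :
    ∫⁻ x, φ (μ (Ici x)) ∂μ ≤ ∫⁻ s in Ioo 0 (μ.real univ), φ (ENNReal.ofReal s) := by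
  have hφG : Measurable fun x => φ (μ (Ici x)) :=
    hφ.measurable.comp (antitone_measure_Ici μ).measurable
  have hφ_ofReal : Measurable fun s => φ (ENNReal.ofReal s) :=
    hφ.measurable.comp ENNReal.measurable_ofReal
  rw [lintegral_eq_lintegral_measure_ofReal_lt μ hφG,
    lintegral_eq_lintegral_measure_ofReal_lt _ hφ_ofReal]
  refine lintegral_mono fun y => ?_
  have hL : IsLowerSet {s | ENNReal.ofReal y < φ s} := fun _ _ h hs => hs.trans_le (hφ h)
  exact (measure_setOf_measure_Ici_mem_le μ hL).trans (Measure.le_restrict_apply _ _)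

lemma lintegral_measure_Ici_rpow_neg_le (μ : Measure X) [IsFiniteMeasure μ] {α : ℝ} (hα0 : 0 ≤ α)
    (hα1 : α < 1) :
    ∫⁻ x, μ (Ici x) ^ (-α) ∂μ ≤ μ univ ^ (1 - α) / ENNReal.ofReal (1 - α) := by
  have hanti : Antitone fun s : ℝ≥0∞ => s ^ (-α) := fun a b h => by
    simpa only [ENNReal.rpow_neg] using ENNReal.inv_le_inv' (ENNReal.rpow_le_rpow h hα0)
  calc ∫⁻ x, μ (Ici x) ^ (-α) ∂μ
      ≤ ∫⁻ s in Ioo 0 (μ.real univ), ENNReal.ofReal s ^ (-α) :=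
        lintegral_antitone_measure_Ici_le μ hanti
    _ = μ univ ^ (1 - α) / ENNReal.ofReal (1 - α) := by
        rw [lintegral_Ioo_ofReal_rpow (neg_lt_neg hα1) measureReal_nonneg, ofReal_measureReal,
          neg_add_eq_sub]

theorem statement12_general (t : X) (w : Measure X) {α : ℝ} (hα0 : 0 ≤ α) (hα1 : α < 1) :
    ∫⁻ x in Ici t, w (Ici x) ^ (-α) ∂w ≤ w (Ici t) ^ (1 - α) / ENNReal.ofReal (1 - α) := by
  rcases eq_or_ne (w (Ici t)) ∞ with htop | hfin
  · rw [htop, ENNReal.top_rpow_of_pos (sub_pos.2 hα1),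
      ENNReal.top_div_of_ne_top ENNReal.ofReal_ne_top]
    exact le_top
  · have : IsFiniteMeasure (w.restrict (Ici t)) := isFiniteMeasure_restrict.2 hfin
    have htail : ∀ x ∈ Ici t, w (Ici x) = w.restrict (Ici t) (Ici x) := fun x hx =>
      (Measure.restrict_eq_self w (Ici_subset_Ici.2 hx)).symm
    calc ∫⁻ x in Ici t, w (Ici x) ^ (-α) ∂w
        = ∫⁻ x in Ici t, w.restrict (Ici t) (Ici x) ^ (-α) ∂w :=
          setLIntegral_congr_fun measurableSet_Ici fun x hx => by simp only [htail x hx]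
      _ ≤ w.restrict (Ici t) univ ^ (1 - α) / ENNReal.ofReal (1 - α) :=
          lintegral_measure_Ici_rpow_neg_le (w.restrict (Ici t)) hα0 hα1
      _ = w (Ici t) ^ (1 - α) / ENNReal.ofReal (1 - α) := by rw [Measure.restrict_apply_univ]

end Tail

theorem statement12 (t : ℝ) (w : Measure ℝ) (α : ℝ) (hα0 : 0 < α) (hα1 : α < 1) :
    ∫⁻ x in Set.Ici t, (w (Set.Ici x)) ^ (-α) ∂w ≤
      (w (Set.Ici t)) ^ (1 - α) / ENNReal.ofReal (1 - α) :=
  statement12_general t w hα0.le hα1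
end
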